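/- For all real p > 0 and x > 0, e^{-√p · x} = ∫_0^∞ e^{-p η x²} · (1/(2√(π η³))) e^{-1/(4η)} dη. -/

import Mathlib

open Real MeasureTheory

/-!
After the substitution `η = y⁻²` the exponents complete to a square,
`p / y² + y² / 4 = (y / 2 - √p / y)² + √p`, and the Cauchy–Schlömilch transformation
`∫₀^∞ f (a s - b / s) ds = (2 a)⁻¹ ∫ f` for even `f` reduces the integral to the Gaussian one.
The Cauchy–Schlömilch transformation holds because `u = a s - b / s` maps `(0, ∞)` bijectively onto
`ℝ` with `du = (a + b / s²) ds`, while the involution `s ↦ (b / a) / s` only changes the sign of `u`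
and so exchanges the two summands `a ds` and `(b / s²) ds`.
-/

open Set

section CauchySchlomilch

variable {E : Type*} [NormedAddCommGroup E] [NormedSpace ℝ E] {f : ℝ → E} {a b c : ℝ}

theorem abs_neg_natCast_mul_rpow_sub_one (n : ℕ) {s : ℝ} (hs : 0 < s) :
    |(-n : ℝ)| * s ^ (-n - 1 : ℝ) = n / s ^ (n + 1) := by
  rw [abs_neg, Nat.abs_cast, ← neg_add', rpow_neg hs.le, ← Nat.cast_add_one, rpow_natCast,
    div_eq_mul_inv]

theorem integral_Ioi_comp_inv_pow (f : ℝ → E) {n : ℕ} (hn : n ≠ 0) :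
    ∫ s in Ioi 0, (n / s ^ (n + 1) : ℝ) • f (s ^ n)⁻¹ = ∫ t in Ioi 0, f t := by
  rw [← integral_comp_rpow_Ioi f (neg_ne_zero.2 (Nat.cast_ne_zero.2 hn))]
  refine setIntegral_congr_fun measurableSet_Ioi fun s (hs : 0 < s) ↦ ?_
  simp only [abs_neg_natCast_mul_rpow_sub_one n hs, rpow_neg hs.le, rpow_natCast]

theorem integrableOn_Ioi_comp_inv_pow_iff (f : ℝ → E) {n : ℕ} (hn : n ≠ 0) :
    IntegrableOn (fun s ↦ (n / s ^ (n + 1) : ℝ) • f (s ^ n)⁻¹) (Ioi 0) ↔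
      IntegrableOn f (Ioi 0) := by
  rw [← integrableOn_Ioi_comp_rpow_iff f (neg_ne_zero.2 (Nat.cast_ne_zero.2 hn))]
  refine integrableOn_congr_fun (fun s (hs : 0 < s) ↦ ?_) measurableSet_Ioi
  simp only [abs_neg_natCast_mul_rpow_sub_one n hs, rpow_neg hs.le, rpow_natCast]

theorem integral_Ioi_comp_const_div (f : ℝ → E) (hc : 0 < c) :
    ∫ s in Ioi 0, (c / s ^ 2) • f (c / s) = ∫ t in Ioi 0, f t := by
  calc ∫ s in Ioi 0, (c / s ^ 2) • f (c / s)
      = c • ∫ s in Ioi 0, ((1 : ℕ) / s ^ 2 : ℝ) • f (c * (s ^ 1)⁻¹) := by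
        simp only [← integral_smul, smul_smul, Nat.cast_one, one_mul, pow_one, div_eq_mul_inv]
    _ = c • ∫ s in Ioi 0, f (c * s) := by
        rw [integral_Ioi_comp_inv_pow (fun s ↦ f (c * s)) one_ne_zero]
    _ = ∫ t in Ioi 0, f t := by rw [integral_comp_mul_left_Ioi' f 0 hc, mul_zero]

theorem integrableOn_Ioi_comp_const_div_iff (f : ℝ → E) (hc : 0 < c) :
    IntegrableOn (fun s ↦ (c / s ^ 2) • f (c / s)) (Ioi 0) ↔ IntegrableOn f (Ioi 0) := by
  calc IntegrableOn (fun s ↦ (c / s ^ 2) • f (c / s)) (Ioi 0)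
      ↔ IntegrableOn (fun s ↦ c • ((1 : ℕ) / s ^ 2 : ℝ) • f (c * (s ^ 1)⁻¹)) (Ioi 0) := by
        simp only [smul_smul, Nat.cast_one, one_mul, pow_one, div_eq_mul_inv]
    _ ↔ IntegrableOn (fun s ↦ ((1 : ℕ) / s ^ 2 : ℝ) • f (c * (s ^ 1)⁻¹)) (Ioi 0) := by
        simp only [IntegrableOn, integrable_fun_smul_iff hc.ne']
    _ ↔ IntegrableOn (fun s ↦ f (c * s)) (Ioi 0) :=
        integrableOn_Ioi_comp_inv_pow_iff (fun s ↦ f (c * s)) one_ne_zero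
    _ ↔ IntegrableOn f (Ioi 0) := by rw [integrableOn_Ioi_comp_mul_left_iff f 0 hc, mul_zero]

theorem hasDerivAt_mul_sub_div (a b : ℝ) {s : ℝ} (hs : s ≠ 0) :
    HasDerivAt (fun s ↦ a * s - b / s) (a + b / s ^ 2) s := by
  convert! ((hasDerivAt_id s).const_mul a).sub ((hasDerivAt_inv hs).const_mul b) using 1
  ring

theorem strictMonoOn_mul_sub_div (ha : 0 < a) (hb : 0 ≤ b) :
    StrictMonoOn (fun s ↦ a * s - b / s) (Ioi 0) := by
  intro s (hs : 0 < s) t _ hst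
  have hmul : a * s < a * t := by gcongr
  have hdiv : b / t ≤ b / s := by gcongr
  linarith only [hmul, hdiv]

theorem image_mul_sub_div_Ioi (ha : 0 < a) (hb : 0 < b) :
    (fun s ↦ a * s - b / s) '' Ioi 0 = univ := by
  refine eq_univ_of_forall fun u ↦ ?_
  -- The preimage of `u` is the positive root of `a s² - u s - b`.
  set r := √(u ^ 2 + 4 * a * b)
  have hr_sq : r ^ 2 = u ^ 2 + 4 * a * b := sq_sqrt (by positivity)
  have hr : |u| < r := abs_lt_of_sq_lt_sq (by rw [hr_sq]; linarith [mul_pos ha hb]) (sqrt_nonneg _)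
  have hroot : 0 < u + r := by linarith [neg_abs_le u]
  refine ⟨(u + r) / (2 * a), div_pos hroot (by positivity), ?_⟩
  have hne := hroot.ne'
  simp only
  field_simp
  linear_combination hr_sq

theorem integral_Ioi_add_div_sq_smul_comp_mul_sub_div (f : ℝ → E) (ha : 0 < a) (hb : 0 < b) :
    ∫ s in Ioi 0, (a + b / s ^ 2) • f (a * s - b / s) = ∫ u, f u := by
  rw [← setIntegral_univ (f := f), ← image_mul_sub_div_Ioi ha hb,
    integral_image_eq_integral_abs_deriv_smul measurableSet_Ioi
      (fun s hs ↦ (hasDerivAt_mul_sub_div a b (ne_of_gt hs)).hasDerivWithinAt)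
      (strictMonoOn_mul_sub_div ha hb.le).injOn]
  refine setIntegral_congr_fun measurableSet_Ioi fun s _ ↦ ?_
  rw [abs_of_nonneg (by positivity)]

theorem integrableOn_Ioi_add_div_sq_smul_comp_mul_sub_div_iff (f : ℝ → E) (ha : 0 < a)
    (hb : 0 < b) :
    IntegrableOn (fun s ↦ (a + b / s ^ 2) • f (a * s - b / s)) (Ioi 0) ↔ Integrable f := by
  rw [← integrableOn_univ, ← image_mul_sub_div_Ioi ha hb,
    integrableOn_image_iff_integrableOn_abs_deriv_smul measurableSet_Ioi
      (fun s hs ↦ (hasDerivAt_mul_sub_div a b (ne_of_gt hs)).hasDerivWithinAt)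
      (strictMonoOn_mul_sub_div ha hb.le).injOn]
  refine integrableOn_congr_fun (fun s _ ↦ ?_) measurableSet_Ioi
  rw [abs_of_nonneg (by positivity)]

theorem div_sq_smul_comp_mul_sub_div_of_even (hf : f.Even) (ha : a ≠ 0) (hb : b ≠ 0) (s : ℝ) :
    (b / s ^ 2) • f (a * s - b / s) =
      a • (b / a / s ^ 2) • f (a * (b / a / s) - b / (b / a / s)) := by
  have hneg : a * (b / a / s) - b / (b / a / s) = -(a * s - b / s) := by
    field_simp
    ring
  rw [hneg, hf, smul_smul]
  congr 1
  field_simp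

theorem integral_Ioi_div_sq_smul_comp_mul_sub_div (hf : f.Even) (ha : 0 < a) (hb : 0 < b) :
    ∫ s in Ioi 0, (b / s ^ 2) • f (a * s - b / s) = a • ∫ s in Ioi 0, f (a * s - b / s) := by
  simp only [div_sq_smul_comp_mul_sub_div_of_even hf ha.ne' hb.ne', integral_smul]
  rw [integral_Ioi_comp_const_div (fun s ↦ f (a * s - b / s)) (div_pos hb ha)]

theorem integrableOn_Ioi_div_sq_smul_comp_mul_sub_div_iff (hf : f.Even) (ha : 0 < a)
    (hb : 0 < b) :
    IntegrableOn (fun s ↦ (b / s ^ 2) • f (a * s - b / s)) (Ioi 0) ↔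
      IntegrableOn (fun s ↦ f (a * s - b / s)) (Ioi 0) := by
  simp only [div_sq_smul_comp_mul_sub_div_of_even hf ha.ne' hb.ne']
  exact (integrable_smul_iff ha.ne' _).trans
    (integrableOn_Ioi_comp_const_div_iff (fun s ↦ f (a * s - b / s)) (div_pos hb ha))

theorem integrableOn_Ioi_comp_mul_sub_div_iff (hf : f.Even) (ha : 0 < a) (hb : 0 < b) :
    IntegrableOn (fun s ↦ f (a * s - b / s)) (Ioi 0) ↔ Integrable f := by
  rw [← integrableOn_Ioi_add_div_sq_smul_comp_mul_sub_div_iff f ha hb]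
  constructor
  · intro h
    simp only [add_smul]
    exact (h.smul a).add ((integrableOn_Ioi_div_sq_smul_comp_mul_sub_div_iff hf ha hb).2 h)
  · intro h
    have hmeas : Measurable fun s ↦ (a + b / s ^ 2)⁻¹ := by fun_prop
    have hbound (s : ℝ) : ‖(a + b / s ^ 2)⁻¹‖ ≤ a⁻¹ := by
      rw [norm_of_nonneg (by positivity)]
      gcongr
      exact le_add_of_nonneg_right (by positivity)
    refine (h.bdd_smul a⁻¹ hmeas.aestronglyMeasurable (.of_forall hbound)).congr
      (.of_forall fun s ↦ ?_)
    exact inv_smul_smul₀ (by positivity) _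

theorem integral_Ioi_comp_mul_sub_div (hf : f.Even) (ha : 0 < a) (hb : 0 < b) :
    ∫ s in Ioi 0, f (a * s - b / s) = (2 * a)⁻¹ • ∫ u, f u := by
  by_cases hint : Integrable f
  · have hcomp := (integrableOn_Ioi_comp_mul_sub_div_iff hf ha hb).2 hint
    have hdiv := (integrableOn_Ioi_div_sq_smul_comp_mul_sub_div_iff hf ha hb).2 hcomp
    rw [eq_inv_smul_iff₀ (by positivity)]
    symm
    calc ∫ u, f u
        = ∫ s in Ioi 0, (a • f (a * s - b / s) + (b / s ^ 2) • f (a * s - b / s)) := by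
          simp only [← add_smul, integral_Ioi_add_div_sq_smul_comp_mul_sub_div f ha hb]
      _ = a • (∫ s in Ioi 0, f (a * s - b / s)) + a • ∫ s in Ioi 0, f (a * s - b / s) := by
          rw [integral_add (hcomp.fun_smul a) hdiv, integral_smul,
            integral_Ioi_div_sq_smul_comp_mul_sub_div hf ha hb]
      _ = (2 * a) • ∫ s in Ioi 0, f (a * s - b / s) := by rw [← add_smul, two_mul]
  · rw [integral_undef hint, smul_zero]
    exact integral_undef (mt (integrableOn_Ioi_comp_mul_sub_div_iff hf ha hb).1 hint)

end CauchySchlomilch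

theorem integral_Ioi_exp_neg_sq_mul_sub_div {a b : ℝ} (ha : 0 < a) (hb : 0 < b) :
    ∫ s in Ioi 0, exp (-(a * s - b / s) ^ 2) = √π / (2 * a) := by
  have hgauss : ∫ u : ℝ, exp (-u ^ 2) = √π := by simpa using integral_gaussian 1
  have heven : (fun u : ℝ ↦ exp (-u ^ 2)).Even := fun u ↦ by simp only [neg_sq]
  rw [integral_Ioi_comp_mul_sub_div heven ha hb, hgauss, smul_eq_mul, inv_mul_eq_div]

/-- The one-sided Lévy stable density of index `1 / 2`, normalised so that its Laplace transform is
`exp (-√p)`. Since `√` of a negative number and `1 / 0` are both `0`, the formula already vanishes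
for `η ≤ 0`. -/
noncomputable def levyDensity (η : ℝ) : ℝ :=
  1 / (2 * √(π * η ^ 3)) * exp (-1 / (4 * η))

theorem levyDensity_inv_sq {y : ℝ} (hy : 0 < y) :
    levyDensity (y ^ 2)⁻¹ = y ^ 3 / (2 * √π) * exp (-(y / 2) ^ 2) := by
  have hsqrt : √(π * (y ^ 2)⁻¹ ^ 3) = √π / y ^ 3 := by
    rw [show π * (y ^ 2)⁻¹ ^ 3 = π / (y ^ 3) ^ 2 by field_simp, sqrt_div' _ (by positivity),
      sqrt_sq (by positivity)]
  have hexp : -1 / (4 * (y ^ 2)⁻¹) = -(y / 2) ^ 2 := by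
    field_simp
    norm_num
  rw [levyDensity, hsqrt, hexp]
  field_simp

theorem integral_exp_neg_mul_levyDensity {p : ℝ} (hp : 0 < p) :
    ∫ η in Ioi 0, exp (-(p * η)) * levyDensity η = exp (-√p) := by
  have hintegrand (y : ℝ) (hy : 0 < y) :
      2 / y ^ 3 * (exp (-(p * (y ^ 2)⁻¹)) * levyDensity (y ^ 2)⁻¹) =
        exp (-√p) / √π * exp (-(1 / 2 * y - √p / y) ^ 2) := by
    have hsquare : -(p * (y ^ 2)⁻¹) + -(y / 2) ^ 2 = -√p + -(1 / 2 * y - √p / y) ^ 2 := by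
      field_simp
      linear_combination 4 * sq_sqrt hp.le
    calc 2 / y ^ 3 * (exp (-(p * (y ^ 2)⁻¹)) * levyDensity (y ^ 2)⁻¹)
        = exp (-(p * (y ^ 2)⁻¹) + -(y / 2) ^ 2) / √π := by
          rw [levyDensity_inv_sq hy, exp_add]
          field_simp
      _ = exp (-√p) / √π * exp (-(1 / 2 * y - √p / y) ^ 2) := by
          rw [hsquare, exp_add]
          ring
  calc ∫ η in Ioi 0, exp (-(p * η)) * levyDensity η
      = ∫ y in Ioi 0, 2 / y ^ 3 * (exp (-(p * (y ^ 2)⁻¹)) * levyDensity (y ^ 2)⁻¹) := by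
        rw [← integral_Ioi_comp_inv_pow _ two_ne_zero]
        simp only [smul_eq_mul, Nat.cast_ofNat, Nat.reduceAdd]
    _ = exp (-√p) / √π * ∫ y in Ioi 0, exp (-(1 / 2 * y - √p / y) ^ 2) := by
        rw [setIntegral_congr_fun measurableSet_Ioi hintegrand, integral_const_mul]
    _ = exp (-√p) := by
        rw [integral_Ioi_exp_neg_sq_mul_sub_div one_half_pos (sqrt_pos.2 hp)]
        field_simp

/-- For `p > 0` and `x > 0`,
`e^{-√p x} = ∫_0^∞ e^{-p η x²} · (1/(2√(π η³))) e^{-1/(4η)} dη`. -/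
theorem exp_sqrt_levy_repr (p x : ℝ) (hp : 0 < p) (hx : 0 < x) :
    Real.exp (-Real.sqrt p * x) =
      ∫ η in Set.Ioi (0:ℝ),
        Real.exp (-p * η * x ^ 2) *
          (1 / (2 * Real.sqrt (π * η ^ 3)) * Real.exp (-1 / (4 * η))) := by
  have hsqrt : √(p * x ^ 2) = √p * x := by rw [sqrt_mul hp.le, sqrt_sq hx.le]
  have hexponent (η : ℝ) : -p * η * x ^ 2 = -(p * x ^ 2 * η) := by ring
  simp only [neg_mul (√p), ← hsqrt, hexponent]
  exact (integral_exp_neg_mul_levyDensity (by positivity)).symm
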